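/- Let T be a homeomorphism of a compact topological space X, V a Banach space, and A a continuous linear cocycle over T of bounded injective linear operators. Suppose there exist an integer k ≥ 1, continuous maps 𝓔, 𝓕 from X to the closed subspaces of V with V = 𝓔(x) ⊕ 𝓕(x), dim 𝓔(x) = k for all x, A^n_x 𝓔(x) = 𝓔(T^n x) and A^n_x 𝓕(x) ⊆ 𝓕(T^n x) for all x ∈ X and n ≥ 1, and constants K > 0, τ ∈ (0,1) such that sup{|A^n_x v| / |A^n_x u| : u ∈ 𝓔(x), v ∈ 𝓕(x), |u| = |v| = 1} ≤ K τ^n for all x ∈ X and n ≥ 1. Then there exists a constant K' > 0 such that max{c_{k+1}(A^n_x), c_{k+1}(A^n_{Tx})} ≤ K' τ^n c_k(A^{n+1}_x) for all x ∈ X and n ≥ 1. -/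

import Mathlib

/-!
The subspace `𝓕 x` has codimension `k`, so it is a competitor in `c_{k+1}(A^n_x)`, and domination
bounds `‖A^n_x|_{𝓕 x}‖` by `K τ^n ‖A^n_x w‖ / ‖w‖` for any nonzero `w ∈ 𝓔 x`
(`gelfand_succ_le`). Conversely every subspace `G` of codimension `k - 1` meets the
`k`-dimensional space `𝓔 x` in some `u ≠ 0` (`exists_mem_inf_ne_zero`), so that
`‖A^{n+1}_x u‖ ≤ ‖A^{n+1}_x|_G‖ ‖u‖`.

The two sides are linked by a constant `a > 0` with `a ‖u‖ ≤ ‖A_y u‖` for all `y` and `u ∈ 𝓔 y`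
(`exists_uniform_lower_bound`). It exists pointwise because `A_y` is injective on the
finite-dimensional space `𝓔 y`, persists nearby because `𝓔` and `A` are continuous, and becomes
uniform by compactness of `X`. Writing `A^{n+1}_x = A_{T^n x} ∘ A^n_x`, the vector `w = u` gives the
bound for `c_{k+1}(A^n_x)`; writing `A^{n+1}_x = A^n_{Tx} ∘ A_x`, the vector `w = A_x u` gives the
bound for `c_{k+1}(A^n_{Tx})`. The constant is `K' = K / a`.

The infimum defining `c_k` is over a nonempty set (`exists_closedCodim_of_le`), which is needed
because `sInf ∅ = 0` in `ℝ`.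
-/

open Metric Filter MeasureTheory Topology

noncomputable section

section Defs

variable {V W : Type*} [NormedAddCommGroup V] [NormedSpace ℝ V]
  [NormedAddCommGroup W] [NormedSpace ℝ W]

/-- The operator norm of the restriction of `A` to the subspace `E`, `‖A|_E‖`. -/
noncomputable def restrNorm (A : V →L[ℝ] W) (E : Submodule ℝ V) : ℝ :=
  ‖A.comp E.subtypeL‖

/-- The minimal norm `m(A|_E) = inf {‖A v‖ : v ∈ E, ‖v‖ = 1}`. -/
noncomputable def minNorm (A : V →L[ℝ] W) (E : Submodule ℝ V) : ℝ :=
  sInf {r : ℝ | ∃ v ∈ E, ‖v‖ = 1 ∧ r = ‖A v‖}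

/-- `F` is a closed subspace of codimension `n`. -/
def ClosedCodim (F : Submodule ℝ V) (n : ℕ) : Prop :=
  IsClosed (F : Set V) ∧ FiniteDimensional ℝ (V ⧸ F) ∧ Module.finrank ℝ (V ⧸ F) = n

/-- The `k`-th Gelfand number of `A` (meaningful for `k ≥ 1`):
`c_k(A) = inf {‖A|_F‖ : F a closed subspace of codimension k - 1}`. -/
noncomputable def gelfand (k : ℕ) (A : V →L[ℝ] W) : ℝ :=
  sInf {r : ℝ | ∃ F : Submodule ℝ V, ClosedCodim F (k - 1) ∧ r = restrNorm A F}

/-- The unit sphere of a subspace. -/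
def subSphere (E : Submodule ℝ V) : Set V := {v : V | v ∈ E ∧ ‖v‖ = 1}

/-- Hausdorff distance between the unit spheres of two subspaces. -/
noncomputable def dHaus (E F : Submodule ℝ V) : ℝ :=
  Metric.hausdorffDist (subSphere E) (subSphere F)

/-- `π` is the (bounded) projection onto `E` parallel to `F`. -/
def IsProjOn (π : V →L[ℝ] V) (E F : Submodule ℝ V) : Prop :=
  (∀ v ∈ E, π v = v) ∧ (∀ v ∈ F, π v = 0)

open scoped Classical in
/-- The (unsigned) determinant `det(A|E)` of `A` restricted to a finite-dimensional
subspace `E`, defined as the ratio of the induced (Haar) volume of the image `A B_E`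
of the unit ball of `E` to that of the unit ball of `A E`; it equals `0` when `A|_E`
is not injective.  (The value of the ratio does not depend on the choice of linear
equivalence with `ℝ^k`, since any two such differ by a linear automorphism, which
rescales both volumes by the same factor.) -/
noncomputable def detOn (A : V →L[ℝ] W) (E : Submodule ℝ V) : ℝ :=
  if h : Nonempty ((↥(E.map A.toLinearMap)) ≃ₗ[ℝ] (Fin (Module.finrank ℝ ↥E) → ℝ)) then
    (volume (⇑h.some '' {w : ↥(E.map A.toLinearMap) | ∃ v ∈ E, ‖v‖ ≤ 1 ∧ A v = (w : W)})).toReal /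
      (volume (⇑h.some '' {w : ↥(E.map A.toLinearMap) | ‖(w : W)‖ ≤ 1})).toReal
  else 0

/-- `V_k(A)`: the maximal `k`-dimensional volume growth of `A`,
`V_k(A) = sup {det(A|E) : E ⊆ V a k-dimensional subspace}`. -/
noncomputable def volGrowth (k : ℕ) (A : V →L[ℝ] W) : ℝ :=
  sSup {r : ℝ | ∃ E : Submodule ℝ V, FiniteDimensional ℝ ↥E ∧ Module.finrank ℝ ↥E = k ∧
    r = detOn A E}

/-- `V_k(A|_G)`: maximal volume growth among `k`-dimensional subspaces of `G`. -/
noncomputable def volGrowthOn (k : ℕ) (A : V →L[ℝ] W) (G : Submodule ℝ V) : ℝ :=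
  sSup {r : ℝ | ∃ E : Submodule ℝ V, E ≤ G ∧ FiniteDimensional ℝ ↥E ∧
    Module.finrank ℝ ↥E = k ∧ r = detOn A E}

/-- `A : X × ℕ → L(V)` is a linear cocycle over `T`. -/
def IsCocycle {X : Type*} (T : X → X) (A : X → ℕ → (V →L[ℝ] V)) : Prop :=
  (∀ x, A x 0 = 1) ∧ ∀ x n m, A x (n + m) = (A (T^[m] x) n).comp (A x m)

/-- Continuity of a subspace-valued map with respect to the Hausdorff distance
between unit spheres. -/
def SubContinuous {X : Type*} [TopologicalSpace X] (𝓔 : X → Submodule ℝ V) : Prop :=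
  ∀ x : X, ∀ ε > (0 : ℝ), ∀ᶠ y in nhds x, dHaus (𝓔 x) (𝓔 y) < ε

end Defs

end

section Gap

variable {V : Type*} [NormedAddCommGroup V] [NormedSpace ℝ V]

lemma restrNorm_le {A : V →L[ℝ] V} {F : Submodule ℝ V} {C : ℝ} (hC : 0 ≤ C)
    (h : ∀ v ∈ F, ‖A v‖ ≤ C * ‖v‖) : restrNorm A F ≤ C :=
  ContinuousLinearMap.opNorm_le_bound _ hC fun v => h v v.2

lemma le_restrNorm (A : V →L[ℝ] V) {F : Submodule ℝ V} {v : V} (hv : v ∈ F) :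
    ‖A v‖ ≤ restrNorm A F * ‖v‖ :=
  (A.comp F.subtypeL).le_opNorm ⟨v, hv⟩

lemma restrNorm_nonneg (A : V →L[ℝ] V) (F : Submodule ℝ V) : 0 ≤ restrNorm A F :=
  norm_nonneg (A.comp F.subtypeL)

lemma gelfand_le {A : V →L[ℝ] V} {k : ℕ} {F : Submodule ℝ V} (hF : ClosedCodim F (k - 1)) :
    gelfand k A ≤ restrNorm A F := by
  refine csInf_le ⟨0, ?_⟩ ⟨F, hF, rfl⟩
  rintro r ⟨G, -, rfl⟩
  exact restrNorm_nonneg A G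

lemma closedCodim_of_isCompl {E F : Submodule ℝ V} {k : ℕ} (hF : IsClosed (F : Set V))
    (h : IsCompl E F) (hE : FiniteDimensional ℝ E) (hk : Module.finrank ℝ E = k) :
    ClosedCodim F k := by
  have e := Submodule.quotientEquivOfIsCompl F E h.symm
  exact ⟨hF, e.symm.finiteDimensional, e.finrank_eq.trans hk⟩

/-- If a closed subspace of codimension `k` exists, so does one of every codimension `j ≤ k`:
compose the quotient map with a surjection `ℝ^k → ℝ^j` and take the kernel. -/
lemma exists_closedCodim_of_le {F : Submodule ℝ V} {j k : ℕ} (hF : ClosedCodim F k)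
    (hjk : j ≤ k) : ∃ G : Submodule ℝ V, ClosedCodim G j := by
  obtain ⟨hcl, hfd, hfr⟩ := hF
  have : IsClosed (F : Set V) := hcl
  let e : (V ⧸ F) ≃ₗ[ℝ] (Fin k → ℝ) :=
    LinearEquiv.ofFinrankEq _ _ (by simp [hfr])
  let g : (Fin k → ℝ) →ₗ[ℝ] (Fin j → ℝ) := LinearMap.funLeft ℝ ℝ (Fin.castLE hjk)
  have hg : Function.Surjective g :=
    LinearMap.funLeft_surjective_of_injective ℝ ℝ _ (Fin.castLE_injective hjk)
  let f : V →ₗ[ℝ] (Fin j → ℝ) := (g ∘ₗ e.toLinearMap) ∘ₗ F.mkQ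
  have hf : Function.Surjective f :=
    (hg.comp e.surjective).comp (Submodule.mkQ_surjective F)
  have hcont : Continuous f :=
    (LinearMap.continuous_of_finiteDimensional (g ∘ₗ e.toLinearMap)).comp F.mkQL.continuous
  have q := f.quotKerEquivOfSurjective hf
  refine ⟨LinearMap.ker f, ?_, q.symm.finiteDimensional, by simpa using q.finrank_eq⟩
  exact isClosed_singleton.preimage hcont

lemma exists_mem_inf_ne_zero {E G : Submodule ℝ V} [FiniteDimensional ℝ E] {j : ℕ}
    (hG : ClosedCodim G j) (hj : j < Module.finrank ℝ E) : ∃ u ∈ E, u ∈ G ∧ u ≠ 0 := by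
  obtain ⟨-, hfd, hfr⟩ := hG
  have hker : LinearMap.ker (G.mkQ ∘ₗ E.subtype) ≠ ⊥ :=
    LinearMap.ker_ne_bot_of_finrank_lt (by omega)
  obtain ⟨u, hu, hu0⟩ := Submodule.exists_mem_ne_zero_of_ne_bot hker
  exact ⟨u, u.2, by simpa using hu, by simpa using hu0⟩

/-- An upper bound for `c_{k+1}` from a dominated complement: any single nonzero vector `w` of the
dominating space `E` controls the operator on all of `F`. -/
lemma gelfand_succ_le {A : V →L[ℝ] V} {E F : Submodule ℝ V} {k : ℕ} {c C : ℝ}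
    (hF : ClosedCodim F k)
    (hdom : ∀ u ∈ E, ∀ v ∈ F, ‖u‖ = 1 → ‖v‖ = 1 → ‖A v‖ ≤ c * ‖A u‖)
    (hC : 0 ≤ C) {w : V} (hw : w ∈ E) (hw0 : w ≠ 0) (hwC : c * ‖A w‖ ≤ C * ‖w‖) :
    gelfand (k + 1) A ≤ C := by
  refine (gelfand_le (F := F) (by simpa using hF)).trans (restrNorm_le hC fun v hv => ?_)
  rcases eq_or_ne v 0 with rfl | hv0
  · simp
  have hwpos : 0 < ‖w‖ := norm_pos_iff.2 hw0
  have hvpos : 0 < ‖v‖ := norm_pos_iff.2 hv0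
  have h := hdom (‖w‖⁻¹ • w) (E.smul_mem _ hw) (‖v‖⁻¹ • v) (F.smul_mem _ hv)
    (by rw [norm_smul, norm_inv, norm_norm, inv_mul_cancel₀ hwpos.ne'])
    (by rw [norm_smul, norm_inv, norm_norm, inv_mul_cancel₀ hvpos.ne'])
  simp only [map_smul, norm_smul, norm_inv, norm_norm] at h
  have h2 : c * (‖w‖⁻¹ * ‖A w‖) ≤ C := by
    rw [← mul_assoc, mul_comm c, mul_assoc, inv_mul_le_iff₀ hwpos]
    linarith
  have h3 := h.trans h2
  rw [inv_mul_le_iff₀ hvpos] at h3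
  linarith

/-- Local form of the uniform lower bound: near `x`, a vector of the unit sphere of `𝓔 y` is close
to one of the unit sphere of `𝓔 x`, on which the injective map `B x` is bounded below. -/
lemma eventually_lower_bound {X : Type*} [TopologicalSpace X] {B : X → (V →L[ℝ] V)}
    (hB : Continuous B) (hinj : ∀ x, Function.Injective (B x)) {𝓔 : X → Submodule ℝ V}
    (h𝓔 : SubContinuous 𝓔) (hfd : ∀ x, FiniteDimensional ℝ (𝓔 x))
    (hne : ∀ x, (subSphere (𝓔 x)).Nonempty) (x : X) :
    ∃ a > (0 : ℝ), ∀ᶠ y in 𝓝 x, ∀ u ∈ 𝓔 y, a * ‖u‖ ≤ ‖B y u‖ := by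
  have := hfd x
  obtain ⟨L, hL0, hL⟩ := ((B x).toLinearMap ∘ₗ (𝓔 x).subtype).exists_antilipschitzWith
    (LinearMap.ker_eq_bot.2 ((hinj x).comp Subtype.val_injective))
  set b : ℝ := (L : ℝ)⁻¹ with hb
  have hbpos : 0 < b := inv_pos.2 (by exact_mod_cast hL0)
  have hlow : ∀ u ∈ 𝓔 x, b * ‖u‖ ≤ ‖B x u‖ := by
    intro u hu
    have h := hL.le_mul_dist ⟨u, hu⟩ 0
    rw [hb, inv_mul_le_iff₀ (by exact_mod_cast hL0)]
    simpa [dist_eq_norm] using h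
  set ε : ℝ := b / (4 * (‖B x‖ + 1)) with hε
  have hM : 0 < ‖B x‖ + 1 := by positivity
  have hεpos : 0 < ε := by positivity
  have hBε : ‖B x‖ * ε ≤ b / 4 := by
    have : (‖B x‖ + 1) * ε = b / 4 := by rw [hε]; field_simp
    nlinarith
  have hBy : ∀ᶠ y in 𝓝 x, dist (B y) (B x) < b / 4 :=
    (hB.tendsto x).eventually (Metric.ball_mem_nhds _ (by positivity))
  refine ⟨b / 2, by positivity, ?_⟩
  filter_upwards [hBy, h𝓔 x ε hεpos] with y hy1 hy2 u hu
  have hbdd : ∀ E : Submodule ℝ V, Bornology.IsBounded (subSphere E) := fun E =>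
    (Metric.isBounded_sphere (x := (0 : V)) (r := 1)).subset fun v hv => by simpa using hv.2
  -- It suffices to treat unit vectors.
  have hunit : ∀ u ∈ 𝓔 y, ‖u‖ = 1 → b / 2 ≤ ‖B y u‖ := by
    intro u hu hu1
    obtain ⟨v, ⟨hv, hv1⟩, hvu⟩ := Metric.exists_dist_lt_of_hausdorffDist_lt'
      (show u ∈ subSphere (𝓔 y) from ⟨hu, hu1⟩) hy2
      (Metric.hausdorffEDist_ne_top_of_nonempty_of_bounded (hne x) (hne y) (hbdd _) (hbdd _))
    rw [dist_eq_norm] at hvu hy1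
    have h1 := hlow v hv
    rw [hv1, mul_one] at h1
    have h2 : ‖B x (v - u)‖ ≤ b / 4 :=
      ((B x).le_opNorm _).trans ((mul_le_mul_of_nonneg_left hvu.le (norm_nonneg _)).trans hBε)
    have h3 : ‖(B y - B x) u‖ ≤ b / 4 := by
      have := (B y - B x).le_opNorm u
      rw [hu1, mul_one] at this
      linarith
    have h4 : B x v = B y u + B x (v - u) - (B y - B x) u := by
      simp
    have h5 : ‖B x v‖ ≤ ‖B y u‖ + ‖B x (v - u)‖ + ‖(B y - B x) u‖ := by
      rw [h4]
      exact (norm_sub_le _ _).trans (by gcongr; exact norm_add_le _ _)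
    linarith
  rcases eq_or_ne u 0 with rfl | hu0
  · simp
  have hupos : 0 < ‖u‖ := norm_pos_iff.2 hu0
  have h := hunit (‖u‖⁻¹ • u) ((𝓔 y).smul_mem _ hu)
    (by rw [norm_smul, norm_inv, norm_norm, inv_mul_cancel₀ hupos.ne'])
  rw [map_smul, norm_smul, norm_inv, norm_norm, le_inv_mul_iff₀ hupos] at h
  linarith

lemma exists_uniform_lower_bound {X : Type*} [TopologicalSpace X] [CompactSpace X]
    {B : X → (V →L[ℝ] V)}
    (hB : Continuous B) (hinj : ∀ x, Function.Injective (B x)) {𝓔 : X → Submodule ℝ V}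
    (h𝓔 : SubContinuous 𝓔) (hfd : ∀ x, FiniteDimensional ℝ (𝓔 x))
    (hne : ∀ x, (subSphere (𝓔 x)).Nonempty) :
    ∃ a > (0 : ℝ), ∀ y, ∀ u ∈ 𝓔 y, a * ‖u‖ ≤ ‖B y u‖ := by
  have key : ∃ a > (0 : ℝ), ∀ y ∈ (Set.univ : Set X), ∀ u ∈ 𝓔 y, a * ‖u‖ ≤ ‖B y u‖ := by
    refine isCompact_univ.induction_on
      (p := fun s => ∃ a > (0 : ℝ), ∀ y ∈ s, ∀ u ∈ 𝓔 y, a * ‖u‖ ≤ ‖B y u‖) ?_ ?_ ?_ ?_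
    · exact ⟨1, one_pos, by simp⟩
    · rintro s t hst ⟨a, ha, h⟩
      exact ⟨a, ha, fun y hy => h y (hst hy)⟩
    · rintro s t ⟨a, ha, h⟩ ⟨b, hb, h'⟩
      refine ⟨min a b, lt_min ha hb, fun y hy u hu => ?_⟩
      rcases hy with hy | hy
      · exact (mul_le_mul_of_nonneg_right (min_le_left a b) (norm_nonneg u)).trans (h y hy u hu)
      · exact (mul_le_mul_of_nonneg_right (min_le_right a b) (norm_nonneg u)).trans (h' y hy u hu)
    · intro x _
      obtain ⟨a, ha, h⟩ := eventually_lower_bound hB hinj h𝓔 hfd hne x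
      exact ⟨_, mem_nhdsWithin_of_mem_nhds h, a, ha, fun y hy => hy⟩
  obtain ⟨a, ha, h⟩ := key
  exact ⟨a, ha, fun y => h y (Set.mem_univ y)⟩

end Gap

/-- **Lemma 3.7 (converse direction: a dominated splitting implies the
Gelfand-number gap condition).** -/
theorem splitting_implies_gelfand_gap
    {X V : Type*} [TopologicalSpace X] [CompactSpace X]
    [NormedAddCommGroup V] [NormedSpace ℝ V] [CompleteSpace V]
    (T : X ≃ₜ X) (A : X → ℕ → (V →L[ℝ] V))
    (hcoc : IsCocycle (⇑T) A)
    (hcont : Continuous fun x => A x 1)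
    (hinj : ∀ x n, Function.Injective (A x n))
    (k : ℕ) (hk : 1 ≤ k)
    (𝓔 𝓕 : X → Submodule ℝ V)
    (h𝓔cont : SubContinuous 𝓔) (h𝓕cont : SubContinuous 𝓕)
    (h𝓔closed : ∀ x, IsClosed ((𝓔 x : Set V))) (h𝓕closed : ∀ x, IsClosed ((𝓕 x : Set V)))
    (hcompl : ∀ x, IsCompl (𝓔 x) (𝓕 x))
    (hdim : ∀ x, FiniteDimensional ℝ ↥(𝓔 x) ∧ Module.finrank ℝ ↥(𝓔 x) = k)
    (hequivE : ∀ x : X, ∀ n : ℕ, 1 ≤ n → (𝓔 x).map (A x n).toLinearMap = 𝓔 ((⇑T)^[n] x))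
    (hequivF : ∀ x : X, ∀ n : ℕ, 1 ≤ n → (𝓕 x).map (A x n).toLinearMap ≤ 𝓕 ((⇑T)^[n] x))
    (K τ : ℝ) (hK : 0 < K) (hτ : τ ∈ Set.Ioo (0:ℝ) 1)
    (hdom : ∀ x : X, ∀ n : ℕ, 1 ≤ n → ∀ u ∈ 𝓔 x, ∀ v ∈ 𝓕 x, ‖u‖ = 1 → ‖v‖ = 1 →
      ‖A x n v‖ ≤ K * τ ^ n * ‖A x n u‖) :
    ∃ K' > (0:ℝ), ∀ x : X, ∀ n : ℕ, 1 ≤ n →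
      max (gelfand (k+1) (A x n)) (gelfand (k+1) (A (T x) n)) ≤
        K' * τ ^ n * gelfand k (A x (n+1)) := by
  have hne : ∀ x, (subSphere (𝓔 x)).Nonempty := by
    intro x
    have := (hdim x).1
    have : Nontrivial (𝓔 x) :=
      Module.nontrivial_of_finrank_pos (R := ℝ) (by have := (hdim x).2; omega)
    obtain ⟨u, hu⟩ := NormedSpace.sphere_nonempty (E := 𝓔 x) (x := 0) (r := 1) |>.2 zero_le_one
    exact ⟨u, u.2, by simpa using hu⟩
  obtain ⟨a, ha, hlow⟩ := exists_uniform_lower_bound hcont (fun x => hinj x 1) h𝓔cont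
    (fun x => (hdim x).1) hne
  have hcodim : ∀ x, ClosedCodim (𝓕 x) k := fun x =>
    closedCodim_of_isCompl (h𝓕closed x) (hcompl x) (hdim x).1 (hdim x).2
  have hτ0 : 0 < τ := hτ.1
  refine ⟨K / a, by positivity, fun x n hn => ?_⟩
  have hc : 0 < K / a * τ ^ n := by positivity
  rw [← div_le_iff₀' hc]
  obtain ⟨G₀, hG₀⟩ := exists_closedCodim_of_le (hcodim x) (Nat.sub_le k 1)
  refine le_csInf ⟨_, G₀, hG₀, rfl⟩ ?_
  rintro r ⟨G, hG, rfl⟩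
  rw [div_le_iff₀' hc]
  have := (hdim x).1
  obtain ⟨u, huE, huG, hu0⟩ := exists_mem_inf_ne_zero (E := 𝓔 x) hG (by rw [(hdim x).2]; omega)
  have hC : 0 ≤ K / a * τ ^ n * restrNorm (A x (n + 1)) G :=
    mul_nonneg hc.le (restrNorm_nonneg _ _)
  have hu := le_restrNorm (A x (n + 1)) huG
  set r := restrNorm (A x (n + 1)) G
  refine max_le ?_ ?_
  · refine gelfand_succ_le (hcodim x) (hdom x n hn) hC huE hu0 ?_
    have h1 : a * ‖A x n u‖ ≤ ‖A x (n + 1) u‖ := by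
      rw [add_comm n 1, hcoc.2 x 1 n]
      refine hlow _ _ ?_
      rw [← hequivE x n hn]
      exact ⟨u, huE, rfl⟩
    calc K * τ ^ n * ‖A x n u‖ = K / a * τ ^ n * (a * ‖A x n u‖) := by field_simp
      _ ≤ K / a * τ ^ n * (r * ‖u‖) := mul_le_mul_of_nonneg_left (h1.trans hu) hc.le
      _ = K / a * τ ^ n * r * ‖u‖ := by ring
  · have hw : A x 1 u ∈ 𝓔 (T x) := by
      have := hequivE x 1 le_rfl
      rw [Function.iterate_one] at this
      rw [← this]
      exact ⟨u, huE, rfl⟩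
    have hw0 : A x 1 u ≠ 0 := fun h => hu0 (hinj x 1 (h.trans (map_zero _).symm))
    refine gelfand_succ_le (hcodim (T x)) (hdom (T x) n hn) hC hw hw0 ?_
    have h1 : A (T x) n (A x 1 u) = A x (n + 1) u := by
      rw [hcoc.2 x n 1]; rfl
    have h2 := hlow x u huE
    have hr : 0 ≤ r := restrNorm_nonneg _ _
    calc K * τ ^ n * ‖A (T x) n (A x 1 u)‖ = K * τ ^ n * ‖A x (n + 1) u‖ := by rw [h1]
      _ ≤ K * τ ^ n * (r * ‖u‖) := by gcongr
      _ = K / a * τ ^ n * r * (a * ‖u‖) := by field_simp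
      _ ≤ K / a * τ ^ n * r * ‖A x 1 u‖ := by gcongr
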